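/- Let 1 ≤ K ≤ i ≤ d₁−1, fix scalars (λ_u,μ_u) ≠ (0,0) in k² for 0 ≤ u ≤ i, and let (r_h, q_h)_{0 ≤ h ≤ i} be a division system up to level i. Then for all homogeneous polynomials p, l, h, φ, γ ∈ k[X₀,X₁] of degrees d₁−K, K, d₂−d₁+K, d₁ and d₂ respectively, the image of r_i in k[t][X₀,X₁] under the algebra map fixing X₀, X₁ and sending each f_j to the coefficient of X₀^{d₁−j}X₁^{j} in p·l + t·φ and each g_j to the coefficient of X₀^{d₂−j}X₁^{j} in p·h + t·γ (these coefficients being elements of k[t]) is divisible by t^{i−K+1}. -/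

import Mathlib

/-!
Write `E 0 = G`, `E 1 = F`, `E (j + 2) = R_j` for the specialization of `g, f, r₀, r₁, …` at a pair
`(F, G)` over `k[t]`. The identities of a division system then all have the shape
`σ_n E_n = E_{n+1} Q_n + τ_n L_n^{e_n} E_{n+2}`, where `σ_n` is a power of the value of `E_{n+1}` at
the `n`-th point and `τ_{n+1} = σ_n` (`chain_of_system`).

Modulo `t`, the pair has the common factor `p` of degree `d₁ - K`. Suppose the data are generic,
in the sense that `p` vanishes at none of the points and that the value of `E_{n+1}` at the `n`-th
point has `t`-adic order at most `n - K` (read as `0` for `n < K`). Then `p` divides every `E_n`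
modulo `t` for `n ≤ K + 2` (`common_factor`), and since `E_{K+2} = R_K` has degree `d₁ - 1 - K`,
it vanishes modulo `t`. From there on each remainder gains one more factor `t`: `σ_n` is divisible
by `t²` times what `τ_n` is, and `t` cannot be lost by cancellation between `E_{n+1} Q_n` and
`L_n^{e_n} E_{n+2}`, because `L_n` does not divide the reduced `E_{n+1}` and `E_{n+2}` has smaller
degree (`cancel_step`, `T_pow_dvd_chain`).

Genericity is not automatic, for instance when `p` vanishes at one of the points. Divisibility of
`R_i` by a power of `t` is a closed condition on `(p, l, h, φ, γ)`, however, so it suffices to prove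
it at almost every point of a path through the given data (`PolyDep.finite_dvd`,
`dvd_of_system`). That almost all points of the path are generic follows once one of them is, and
the path is chosen to end at such a point: a pair with prescribed Euclidean expansion, in which the
remainder of index `K` carries a factor `t` (`exists_model`). By uniqueness of division the chain of
that pair follows the prescribed expansion up to the expected powers of `t` (`chain_follows_model`).
The path can be kept within factored data, because the pair of the model is itself a multiple of
its `K + 1`-st term modulo `t` (`model_factor`).
-/

open MvPolynomial

noncomputable section

/-- Variables of the ring `A = k[X₀,X₁,f₀,f₁,…,g₀,g₁,…]`. -/
abbrev Avars : Type := Fin 2 ⊕ ℕ ⊕ ℕ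

/-- The weights defining the trigrading of `A` (total degree in the `X`'s, in the `f`'s,
and in the `g`'s). -/
def wA : Avars → ℕ × ℕ × ℕ
  | Sum.inl _ => (1, 0, 0)
  | Sum.inr (Sum.inl _) => (0, 1, 0)
  | Sum.inr (Sum.inr _) => (0, 0, 1)

variable (k : Type) [Field k]

/-- The variable `Xᵢ` of `A`. -/
def XA (i : Fin 2) : MvPolynomial Avars k := X (Sum.inl i)

/-- The variable `f_j` of `A`. -/
def fA (j : ℕ) : MvPolynomial Avars k := X (Sum.inr (Sum.inl j))

/-- The variable `g_j` of `A`. -/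
def gA (j : ℕ) : MvPolynomial Avars k := X (Sum.inr (Sum.inr j))

/-- The generic binary form `f = ∑_{j=0}^{d₁} f_j X₀^{d₁-j} X₁^j`. -/
def fgen (d₁ : ℕ) : MvPolynomial Avars k :=
  ∑ j ∈ Finset.range (d₁ + 1), fA k j * XA k 0 ^ (d₁ - j) * XA k 1 ^ j

/-- The generic binary form `g = ∑_{j=0}^{d₂} g_j X₀^{d₂-j} X₁^j`. -/
def ggen (d₂ : ℕ) : MvPolynomial Avars k :=
  ∑ j ∈ Finset.range (d₂ + 1), gA k j * XA k 0 ^ (d₂ - j) * XA k 1 ^ j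

/-- The linear form `L_{λ,μ} = λ X₁ - μ X₀`. -/
def Lform (lam mu : k) : MvPolynomial Avars k := C lam * XA k 1 - C mu * XA k 0

/-- Substitution `X₀ ↦ λ`, `X₁ ↦ μ`, leaving the `f` and `g` variables unchanged:
this is `a ↦ a(λ,μ)`. -/
def evalXY (lam mu : k) : MvPolynomial Avars k →ₐ[k] MvPolynomial Avars k :=
  aeval (Sum.elim (fun t : Fin 2 => if t = 0 then C lam else C mu)
    (fun j => X (Sum.inr j)))

/-- A division system up to level `j` for the degrees `(d₁, d₂)` and the scalars
`(lam u, mu u)`: a family `(r_i, q_i)_{0 ≤ i ≤ j}` of trihomogeneous elements of `A`, where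
`r_i` has tridegree `(d₁-1-i, d₂-d₁+1+i, 1+i)`, satisfying the identities
`f(λ₀,μ₀)^{d₂-d₁+1}·g = f·q₀ + L_{λ₀,μ₀}^{d₂-d₁+1}·r₀`;
`r₀(λ₁,μ₁)²·f = r₀·q₁ + f(λ₀,μ₀)^{d₂-d₁+1}·L_{λ₁,μ₁}²·r₁` (if `j ≥ 1`); and
`r_{i-1}(λ_i,μ_i)²·r_{i-2} = r_{i-1}·q_i + r_{i-2}(λ_{i-1},μ_{i-1})²·L_{λ_i,μ_i}²·r_i`
for `2 ≤ i ≤ j`. -/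
def IsDivisionSystem (d₁ d₂ : ℕ) (lam mu : ℕ → k) (j : ℕ)
    (r q : ℕ → MvPolynomial Avars k) : Prop :=
  (∀ i ≤ j, IsWeightedHomogeneous wA (r i) (d₁ - 1 - i, d₂ - d₁ + 1 + i, 1 + i)) ∧
  (∀ i ≤ j, ∃ m : ℕ × ℕ × ℕ, IsWeightedHomogeneous wA (q i) m) ∧
  ((evalXY k (lam 0) (mu 0) (fgen k d₁)) ^ (d₂ - d₁ + 1) * ggen k d₂
    = fgen k d₁ * q 0 + Lform k (lam 0) (mu 0) ^ (d₂ - d₁ + 1) * r 0) ∧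
  (1 ≤ j → (evalXY k (lam 1) (mu 1) (r 0)) ^ 2 * fgen k d₁
    = r 0 * q 1 + (evalXY k (lam 0) (mu 0) (fgen k d₁)) ^ (d₂ - d₁ + 1)
        * Lform k (lam 1) (mu 1) ^ 2 * r 1) ∧
  (∀ i, 2 ≤ i → i ≤ j → (evalXY k (lam i) (mu i) (r (i - 1))) ^ 2 * r (i - 2)
    = r (i - 1) * q i + (evalXY k (lam (i - 1)) (mu (i - 1)) (r (i - 2))) ^ 2
        * Lform k (lam i) (mu i) ^ 2 * r i)

/-- Evaluation of an element of `A` at a pair `(F, G)` of binary forms of degrees `d₁` and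
`d₂`: the `k`-algebra map fixing `X₀, X₁` and sending `f_j` (resp. `g_j`) to the coefficient
of `X₀^{d₁-j}X₁^j` in `F` (resp. of `X₀^{d₂-j}X₁^j` in `G`). -/
def evalFG (d₁ d₂ : ℕ) (F G : MvPolynomial (Fin 2) k) :
    MvPolynomial Avars k →ₐ[k] MvPolynomial (Fin 2) k :=
  aeval (Sum.elim (fun t : Fin 2 => X t)
    (Sum.elim
      (fun j => C (coeff (Finsupp.single 0 (d₁ - j) + Finsupp.single 1 j) F))
      (fun j => C (coeff (Finsupp.single 0 (d₂ - j) + Finsupp.single 1 j) G))))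

/-- The value of a binary form at the point `(λ, μ)`. -/
def evalPt (lam mu : k) (P : MvPolynomial (Fin 2) k) : k :=
  eval (fun t : Fin 2 => if t = 0 then lam else mu) P

/-- The inclusion `k[X₀,X₁] → k[t][X₀,X₁]`. -/
def liftT (P : MvPolynomial (Fin 2) k) : MvPolynomial (Fin 2) (Polynomial k) :=
  MvPolynomial.map Polynomial.C P

/-- Evaluation of an element of `A` at a pair `(Ft, Gt)` of binary forms of degrees `d₁` and
`d₂` with coefficients in `k[t]`: the `k`-algebra map fixing `X₀, X₁` and sending `f_j`
(resp. `g_j`) to the coefficient of `X₀^{d₁-j}X₁^j` in `Ft` (resp. of `X₀^{d₂-j}X₁^j` in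
`Gt`), which is an element of `k[t]`. -/
def evalFGt (d₁ d₂ : ℕ) (Ft Gt : MvPolynomial (Fin 2) (Polynomial k)) :
    MvPolynomial Avars k →ₐ[k] MvPolynomial (Fin 2) (Polynomial k) :=
  aeval (Sum.elim (fun t : Fin 2 => X t)
    (Sum.elim
      (fun j => C (coeff (Finsupp.single 0 (d₁ - j) + Finsupp.single 1 j) Ft))
      (fun j => C (coeff (Finsupp.single 0 (d₂ - j) + Finsupp.single 1 j) Gt))))

section

/-! ### The ring `k[t][X₀,X₁]`, reduction modulo `t`, values at points -/

/-- The ring `k[t][X₀,X₁]`. -/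
abbrev Rt : Type := MvPolynomial (Fin 2) (Polynomial k)

/-- The parameter `t`, as an element of `k[t][X₀,X₁]`. -/
def T : Rt k := C Polynomial.X

/-- Reduction modulo `t`. -/
def red : Rt k →+* MvPolynomial (Fin 2) k := MvPolynomial.map Polynomial.constantCoeff

/-- The value in `k[t]` of an element of `k[t][X₀,X₁]` at the point `(lam, mu)` of `k²`. -/
def val (lam mu : k) : Rt k →+* Polynomial k :=
  eval (fun s : Fin 2 => if s = 0 then Polynomial.C lam else Polynomial.C mu)

/-- The linear form `lam * X₁ - mu * X₀` over `k`. -/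
def ell (lam mu : k) : MvPolynomial (Fin 2) k := C lam * X 1 - C mu * X 0

/-- The linear form `lam * X₁ - mu * X₀` over `k[t]`. -/
def LL (lam mu : k) : Rt k := C (Polynomial.C lam) * X 1 - C (Polynomial.C mu) * X 0

variable {k}

lemma T_dvd_iff (a : Rt k) : T k ∣ a ↔ red k a = 0 := by
  unfold T red
  apply C_dvd_iff_map_hom_eq_zero
  intro r
  rw [Polynomial.X_dvd_iff]; rfl

lemma T_pow_dvd_iff (n : ℕ) (a : Rt k) :
    T k ^ n ∣ a ↔ ∀ e, ∀ d < n, (a.coeff e).coeff d = 0 := by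
  unfold T
  rw [← map_pow, C_dvd_iff_dvd_coeff]
  simp only [Polynomial.X_pow_dvd_iff]

lemma T_pow_dvd_C_iff (n : ℕ) (a : Polynomial k) :
    T k ^ n ∣ C a ↔ (Polynomial.X : Polynomial k) ^ n ∣ a := by
  unfold T
  rw [← map_pow]
  constructor
  · intro h
    rw [C_dvd_iff_dvd_coeff] at h
    simpa using h 0
  · exact fun h => map_dvd _ h

lemma T_ne_zero : T k ≠ 0 := by
  unfold T
  simp

lemma T_pow_ne_zero (n : ℕ) : T k ^ n ≠ 0 := pow_ne_zero _ T_ne_zero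

lemma red_C (a : Polynomial k) : red k (C a) = C (a.coeff 0) := by
  simp [red, map_C]

lemma red_LL (a b : k) : red k (LL k a b) = ell k a b := by
  simp [red, LL, ell]

lemma red_liftT (a : MvPolynomial (Fin 2) k) : red k (liftT k a) = a := by
  unfold red liftT
  rw [MvPolynomial.map_map]
  have : (Polynomial.constantCoeff.comp Polynomial.C : k →+* k) = RingHom.id k := by
    ext; simp
  rw [this, MvPolynomial.map_id]

lemma red_T : red k (T k) = 0 := (T_dvd_iff _).1 dvd_rfl

lemma val_coeff_zero (a b : k) (f : Rt k) :
    (val k a b f).coeff 0 = evalPt k a b (red k f) := by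
  have : (Polynomial.constantCoeff.comp (val k a b)) =
      (eval (fun s : Fin 2 => if s = 0 then a else b)).comp (red k) := by
    apply MvPolynomial.ringHom_ext
    · intro r; simp [val, red]
    · intro i; fin_cases i <;> simp [val, red]
  exact congrArg (fun g => g f) this

lemma val_T (a b : k) : val k a b (T k) = Polynomial.X := by simp [val, T]

lemma val_C (a b : k) (c : Polynomial k) : val k a b (C c) = c := by simp [val]

lemma ell_hom (a b : k) : (ell k a b).IsHomogeneous 1 :=
  (isHomogeneous_C_mul_X _ _).sub (isHomogeneous_C_mul_X _ _)

lemma LL_hom (a b : k) : (LL k a b).IsHomogeneous 1 :=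
  (isHomogeneous_C_mul_X _ _).sub (isHomogeneous_C_mul_X _ _)

lemma ell_prime {a b : k} (h : (a, b) ≠ (0, 0)) : Prime (ell k a b) := by
  have h0 : (ell k a b).coeff (Finsupp.single 0 1) = -b := by
    simp [ell, coeff_C_mul, coeff_X, Finsupp.single_left_inj]
  have h1 : (ell k a b).coeff (Finsupp.single 1 1) = a := by
    simp [ell, coeff_C_mul, coeff_X, Finsupp.single_left_inj]
  have hne : ell k a b ≠ 0 := by
    intro he
    rw [he] at h0 h1
    apply h
    simp at h0 h1
    simp [h0, ← h1]
  apply Irreducible.prime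
  apply irreducible_of_totalDegree_eq_one
  · exact (ell_hom a b).totalDegree hne
  · intro x hx
    rw [isUnit_iff_ne_zero]
    rintro rfl
    have e0 := hx (Finsupp.single 0 1)
    have e1 := hx (Finsupp.single 1 1)
    rw [h0, zero_dvd_iff] at e0
    rw [h1, zero_dvd_iff] at e1
    apply h
    simp at e0
    simp [e0, e1]

lemma evalPt_mul (a b : k) (f g : MvPolynomial (Fin 2) k) :
    evalPt k a b (f * g) = evalPt k a b f * evalPt k a b g := by simp [evalPt]

lemma evalPt_add (a b : k) (f g : MvPolynomial (Fin 2) k) :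
    evalPt k a b (f + g) = evalPt k a b f + evalPt k a b g := by simp [evalPt]

lemma ell_not_dvd {a b : k} {f : MvPolynomial (Fin 2) k} (h : evalPt k a b f ≠ 0) :
    ¬ ell k a b ∣ f := by
  rintro ⟨g, rfl⟩
  apply h
  rw [evalPt_mul]
  simp [evalPt, ell, mul_comm]

/-- A form that does not vanish at `(a, b)` and divides `L^e * f` divides `f`. -/
lemma dvd_of_dvd_ell_mul {a b : k} (hab : (a, b) ≠ (0, 0)) {p f : MvPolynomial (Fin 2) k}
    (hp : evalPt k a b p ≠ 0) (e : ℕ) (h : p ∣ ell k a b ^ e * f) : p ∣ f := by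
  have h1 : IsRelPrime (ell k a b) p :=
    ((ell_prime hab).irreducible.isRelPrime_iff_not_dvd).2 (ell_not_dvd hp)
  exact (h1.pow_left (m := e)).symm.dvd_of_dvd_mul_left h

/-- A multiple of a nonzero form cannot be a nonzero form of smaller degree. -/
lemma eq_zero_of_dvd_hom {p f : MvPolynomial (Fin 2) k} {m n : ℕ} (hp : p.IsHomogeneous m)
    (hf : f.IsHomogeneous n) (hmn : n < m) (hp0 : p ≠ 0) (h : p ∣ f) : f = 0 := by
  by_contra hf0
  obtain ⟨g, rfl⟩ := h
  have hg : g ≠ 0 := right_ne_zero_of_mul hf0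
  have h1 := hf.totalDegree hf0
  rw [totalDegree_mul_of_isDomain hp0 hg, hp.totalDegree hp0] at h1
  omega

lemma hom_of_T_mul {f : Rt k} {n d : ℕ} (h : (T k ^ n * f).IsHomogeneous d) :
    f.IsHomogeneous d := by
  intro e he
  apply h
  unfold T
  rw [← map_pow, coeff_C_mul]
  exact mul_ne_zero (pow_ne_zero _ Polynomial.X_ne_zero) he

lemma eq_zero_of_T_pow_dvd {f : Rt k} (h : ∀ n, T k ^ n ∣ f) : f = 0 := by
  ext e d
  simpa using (T_pow_dvd_iff (d + 1) f).1 (h _) e d (by omega)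

/-- The cancellation step. In `ρ * Q + u * L^e * R`, the form `L` does not divide `ρ` modulo `t`
and `R` has smaller degree than `ρ`, so no cancellation between the two summands is possible:
a power of `t` dividing the sum divides `R`. -/
lemma cancel_step {a b : k} (hab : (a, b) ≠ (0, 0)) (e : ℕ) {ρ : Rt k} {u : Polynomial k}
    {m n : ℕ} (hρ : ρ.IsHomogeneous m) (hmn : n < m) (hρv : (val k a b ρ).coeff 0 ≠ 0)
    (hu : u.coeff 0 ≠ 0) (N : ℕ) :
    ∀ {Q R : Rt k}, R.IsHomogeneous n →
      T k ^ N ∣ ρ * Q + C u * LL k a b ^ e * R → T k ^ N ∣ R := by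
  rw [val_coeff_zero] at hρv
  have hρ0 : red k ρ ≠ 0 := by
    intro h
    apply hρv
    simp [h, evalPt]
  induction N with
  | zero => intro Q R _ _; simp
  | succ N ih =>
    intro Q R hR hd
    have h1 : red k (ρ * Q + C u * LL k a b ^ e * R) = 0 := by
      rw [← T_dvd_iff]
      exact (dvd_pow_self _ (by omega)).trans hd
    rw [map_add, map_mul, map_mul, map_mul, map_pow, red_LL, red_C] at h1
    have h2 : ell k a b ^ e ∣ red k Q := by
      apply (ell_prime hab).pow_dvd_of_dvd_mul_left e (ell_not_dvd hρv)
      exact ⟨- (C (u.coeff 0) * red k R), by linear_combination h1⟩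
    obtain ⟨Y, hY⟩ := h2
    have h3 : red k ρ * Y + C (u.coeff 0) * red k R = 0 := by
      have : ell k a b ^ e * (red k ρ * Y + C (u.coeff 0) * red k R) = 0 := by
        rw [hY] at h1
        linear_combination h1
      exact (mul_eq_zero.1 this).resolve_left (pow_ne_zero _ (ell_prime hab).ne_zero)
    have h4 : red k ρ ∣ C (u.coeff 0) * red k R := ⟨-Y, by linear_combination h3⟩
    have h5 : C (u.coeff 0) * red k R = 0 :=
      eq_zero_of_dvd_hom (hρ.map _) ((hR.map _).C_mul _) hmn hρ0 h4
    have h6 : red k R = 0 := (mul_eq_zero.1 h5).resolve_left (by simpa using hu)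
    have h7 : red k Q = 0 := by
      rw [h5, add_zero] at h3
      rw [hY, (mul_eq_zero.1 h3).resolve_left hρ0, mul_zero]
    obtain ⟨R1, rfl⟩ := (T_dvd_iff _).2 h6
    obtain ⟨Q1, rfl⟩ := (T_dvd_iff _).2 h7
    rw [pow_succ']
    apply mul_dvd_mul_left
    apply ih (Q := Q1) (hom_of_T_mul (n := 1) (by simpa using hR))
    have : T k ^ N * T k ∣ (ρ * Q1 + C u * LL k a b ^ e * R1) * T k := by
      rw [← pow_succ]
      convert hd using 1
      ring
    exact (mul_dvd_mul_iff_right T_ne_zero).1 this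

/-- Uniqueness in the division by `ρ` with remainder a multiple of `L^e`. -/
lemma cancel_zero {a b : k} (hab : (a, b) ≠ (0, 0)) (e : ℕ) {ρ : Rt k}
    {m n : ℕ} (hρ : ρ.IsHomogeneous m) (hmn : n < m) (hρv : (val k a b ρ).coeff 0 ≠ 0)
    {Q R : Rt k} (hR : R.IsHomogeneous n)
    (h : ρ * Q + LL k a b ^ e * R = 0) : R = 0 := by
  apply eq_zero_of_T_pow_dvd
  intro N
  apply cancel_step hab e hρ hmn hρv (u := 1) (by simp) N (Q := Q) hR
  rw [C_1, one_mul, h]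
  exact dvd_zero _

/-! ### Division chains over `k[t]` -/

/-- The exponent of `L` in the `n`-th division: `d₂ - d₁ + 1` for the first one, then `2`. -/
def ex (d₁ d₂ : ℕ) : ℕ → ℕ
  | 0 => d₂ - d₁ + 1
  | _ + 1 => 2

/-- The degree in `X₀, X₁` of the `n`-th term of a sequence of remainders `G, F, R₀, R₁, …`. -/
def dg (d₁ d₂ : ℕ) : ℕ → ℕ
  | 0 => d₂
  | n + 1 => d₁ - n

/-- The scalar multiplying the dividend in the `n`-th division. -/
def sg (d₁ d₂ : ℕ) (lam mu : ℕ → k) (E : ℕ → Rt k) (n : ℕ) : Polynomial k :=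
  val k (lam n) (mu n) (E (n + 1)) ^ ex d₁ d₂ n

/-- The scalar multiplying the remainder in the `n`-th division: it is the scalar of the
preceding dividend. -/
def ta (d₁ d₂ : ℕ) (lam mu : ℕ → k) (E : ℕ → Rt k) : ℕ → Polynomial k
  | 0 => 1
  | n + 1 => sg d₁ d₂ lam mu E n

/-- A division system specialized to `k[t]`, with the uniform indexing `E 0 = G`, `E 1 = F`,
`E (j + 2) = R_j`. -/
structure Chain (d₁ d₂ i : ℕ) (lam mu : ℕ → k) (E Q : ℕ → Rt k) : Prop where
  hom : ∀ n ≤ i + 2, (E n).IsHomogeneous (dg d₁ d₂ n)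
  rel : ∀ n ≤ i, C (sg d₁ d₂ lam mu E n) * E n = E (n + 1) * Q n +
    C (ta d₁ d₂ lam mu E n) * LL k (lam n) (mu n) ^ ex d₁ d₂ n * E (n + 2)

/-- The values of the divisors at the prescribed points have `t`-adic order at most `n - K`;
this is the generic behaviour. -/
def Good (K i : ℕ) (lam mu : ℕ → k) (E : ℕ → Rt k) : Prop :=
  ∀ n ≤ i, ¬ (Polynomial.X : Polynomial k) ^ (n - K + 1) ∣ val k (lam n) (mu n) (E (n + 1))

lemma val_ne_of_good {K i : ℕ} {lam mu : ℕ → k} {E : ℕ → Rt k} (hg : Good K i lam mu E)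
    {n : ℕ} (hn : n ≤ i) {B : Rt k} (hB : E (n + 1) = T k ^ (n - K) * B) :
    (val k (lam n) (mu n) B).coeff 0 ≠ 0 := by
  intro h
  apply hg n hn
  rw [hB, map_mul, map_pow, val_T, pow_succ]
  exact mul_dvd_mul_left _ (Polynomial.X_dvd_iff.2 h)

/-- As long as the divisors stay nonzero modulo `t`, a common factor `p` of `F` and `G` modulo
`t` divides all remainders modulo `t`. -/
lemma common_factor {d₁ d₂ K i : ℕ} (hKi : K ≤ i)
    {lam mu : ℕ → k} (hlm : ∀ u ≤ i, (lam u, mu u) ≠ (0, 0)) {E Q : ℕ → Rt k}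
    (hc : Chain d₁ d₂ i lam mu E Q) {p : MvPolynomial (Fin 2) k}
    (hpv : ∀ u ≤ i, evalPt k (lam u) (mu u) p ≠ 0)
    (h0 : p ∣ red k (E 0)) (h1 : p ∣ red k (E 1)) (hg : Good K i lam mu E) :
    ∀ n ≤ K + 2, p ∣ red k (E n) := by
  intro n
  induction n using Nat.strong_induction_on with
  | _ n ih =>
    intro hn
    match n, ih, hn with
    | 0, _, _ => exact h0
    | 1, _, _ => exact h1
    | n + 2, ih, hn =>
      have hni : n ≤ i := by omega
      have ha := ih n (by omega) (by omega)
      have hb := ih (n + 1) (by omega) (by omega)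
      have hta : (ta d₁ d₂ lam mu E n).coeff 0 ≠ 0 := by
        cases n with
        | zero => simp [ta]
        | succ n =>
          have := val_ne_of_good hg (n := n) (by omega) (B := E (n + 1))
            (by simp [show n - K = 0 by omega])
          simp only [ta, sg, Polynomial.coeff_zero_eq_eval_zero, Polynomial.eval_pow] at this ⊢
          exact pow_ne_zero _ this
      have hr := congrArg (red k) (hc.rel n hni)
      simp only [map_mul, map_add, map_pow, red_C, red_LL] at hr
      apply dvd_of_dvd_ell_mul (hlm n hni) (hpv n hni) (ex d₁ d₂ n)
      have hu : IsUnit (C ((ta d₁ d₂ lam mu E n).coeff 0) : MvPolynomial (Fin 2) k) :=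
        (isUnit_iff_ne_zero.2 hta).map C
      rw [← hu.dvd_mul_left, ← mul_assoc]
      rw [← sub_eq_iff_eq_add'] at hr
      rw [← hr]
      exact dvd_sub (ha.mul_left _) (hb.mul_right _)

/-- For generic data the remainders acquire one more factor `t` at each step after the `K`-th. -/
lemma T_pow_dvd_chain {d₁ d₂ K i : ℕ} (hK1 : 1 ≤ K) (hKi : K ≤ i) (hi : i + 1 ≤ d₁)
    {lam mu : ℕ → k} (hlm : ∀ u ≤ i, (lam u, mu u) ≠ (0, 0)) {E Q : ℕ → Rt k}
    (hc : Chain d₁ d₂ i lam mu E Q) {p : MvPolynomial (Fin 2) k} (hp : p.IsHomogeneous (d₁ - K))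
    (hpv : ∀ u ≤ i, evalPt k (lam u) (mu u) p ≠ 0)
    (h0 : p ∣ red k (E 0)) (h1 : p ∣ red k (E 1)) (hg : Good K i lam mu E) :
    ∀ n ≤ i + 2, T k ^ (n - 1 - K) ∣ E n := by
  have hp0 : p ≠ 0 := by
    rintro rfl
    exact hpv 0 (by omega) (by simp [evalPt])
  intro n
  induction n using Nat.strong_induction_on with
  | _ n ih =>
    intro hn
    rcases Nat.lt_or_ge n (K + 2) with h | h
    · rw [show n - 1 - K = 0 by omega, pow_zero]
      exact one_dvd _
    rcases Nat.eq_or_lt_of_le h with h | h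
    · subst h
      rw [show K + 2 - 1 - K = 1 by omega, pow_one, T_dvd_iff]
      refine eq_zero_of_dvd_hom hp ((hc.hom (K + 2) hn).map _) ?_ hp0
        (common_factor hKi hlm hc hpv h0 h1 hg _ le_rfl)
      simp only [dg]
      omega
    -- now `n = K + m + 2` with `m ≥ 1`
    obtain ⟨m, rfl⟩ : ∃ m, n = K + (m + 1) + 2 := ⟨n - K - 3, by omega⟩
    obtain ⟨A, hA⟩ := ih (K + (m + 1)) (by omega) (by omega)
    obtain ⟨B, hB⟩ := ih (K + (m + 1) + 1) (by omega) (by omega)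
    rw [show K + (m + 1) - 1 - K = m by omega] at hA
    rw [show K + (m + 1) + 1 - 1 - K = m + 1 by omega] at hB
    rw [show K + (m + 1) + 2 - 1 - K = m + 2 by omega]
    have hAv : (val k (lam (K + m)) (mu (K + m)) A).coeff 0 ≠ 0 :=
      val_ne_of_good hg (n := K + m) (by omega) (by rw [← add_assoc] at hA; rw [hA]; simp)
    have hBv : (val k (lam (K + (m + 1))) (mu (K + (m + 1))) B).coeff 0 ≠ 0 :=
      val_ne_of_good hg (n := K + (m + 1)) (by omega) (by rw [hB]; simp)
    have hr := hc.rel (K + (m + 1)) (by omega)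
    have hex : ∀ j, 1 ≤ j → ex d₁ d₂ j = 2 := by
      intro j hj
      obtain ⟨j, rfl⟩ : ∃ j', j = j' + 1 := ⟨j - 1, by omega⟩
      rfl
    have hta : ta d₁ d₂ lam mu E (K + (m + 1)) =
        Polynomial.X ^ (2 * m) * val k (lam (K + m)) (mu (K + m)) A ^ 2 := by
      rw [← add_assoc]
      simp only [ta, sg]
      rw [hex _ (by omega), show K + m + 1 = K + (m + 1) by ring, hA, map_mul, map_pow, val_T]
      ring
    have hsg : sg d₁ d₂ lam mu E (K + (m + 1)) =
        Polynomial.X ^ (2 * m + 2) * val k (lam (K + (m + 1))) (mu (K + (m + 1))) B ^ 2 := by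
      simp only [sg]
      rw [hex _ (by omega), hB, map_mul, map_pow, val_T]
      ring
    rw [hta, hsg, hex _ (by omega), hB] at hr
    have hBhom : B.IsHomogeneous (d₁ - (K + (m + 1))) := by
      have := hc.hom (K + (m + 1) + 1) (by omega)
      rw [hB] at this
      exact hom_of_T_mul this
    have hCX : (C Polynomial.X : Rt k) = T k := rfl
    simp only [map_mul, map_pow, hCX] at hr
    have key : T k ^ (2 * m + (m + 2)) ∣ T k ^ (2 * m) * E (K + (m + 1) + 2) := by
      refine cancel_step (hlm (K + (m + 1)) (by omega)) 2 (ρ := B)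
        (u := val k (lam (K + m)) (mu (K + m)) A ^ 2) (n := d₁ - (K + (m + 1) + 1)) hBhom
        (by omega) hBv ?_ (2 * m + (m + 2)) (Q := T k ^ (m + 1) * Q (K + (m + 1))) ?_ ?_
      · rw [Polynomial.coeff_zero_eq_eval_zero, Polynomial.eval_pow,
          ← Polynomial.coeff_zero_eq_eval_zero]
        exact pow_ne_zero _ hAv
      · have := hc.hom (K + (m + 1) + 2) (by omega)
        unfold T
        rw [← map_pow]
        exact this.C_mul _
      · refine ⟨C (val k (lam (K + (m + 1))) (mu (K + (m + 1))) B) ^ 2 * A, ?_⟩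
        rw [hA] at hr
        simp only [map_pow]
        linear_combination -hr
    rw [pow_add] at key
    exact (mul_dvd_mul_iff_left (T_pow_ne_zero _)).1 key

/-- `R` equals `t^m * E` up to factors in `k[t]` that are prime to `t`. -/
def TRel (m : ℕ) (R E : Rt k) : Prop :=
  ∃ c d : Polynomial k, c.coeff 0 ≠ 0 ∧ d.coeff 0 ≠ 0 ∧ C c * R = T k ^ m * C d * E

lemma coeff_zero_mul_ne {a b : Polynomial k} (ha : a.coeff 0 ≠ 0) (hb : b.coeff 0 ≠ 0) :
    (a * b).coeff 0 ≠ 0 := by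
  rw [Polynomial.mul_coeff_zero]; exact mul_ne_zero ha hb

lemma coeff_zero_pow_ne {a : Polynomial k} (ha : a.coeff 0 ≠ 0) (n : ℕ) :
    (a ^ n).coeff 0 ≠ 0 := by
  rw [Polynomial.coeff_zero_eq_eval_zero, Polynomial.eval_pow,
    ← Polynomial.coeff_zero_eq_eval_zero]
  exact pow_ne_zero _ ha

/-- The scalar of a division has the expected order in `t`, up to factors prime to `t`. -/
lemma rel_val {m : ℕ} {R E : Rt k} (h : TRel m R E) (a b : k)
    (hE : (val k a b E).coeff 0 ≠ 0) (e : ℕ) :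
    ∃ c d : Polynomial k, c.coeff 0 ≠ 0 ∧ d.coeff 0 ≠ 0 ∧
      c * val k a b R ^ e = Polynomial.X ^ (e * m) * d := by
  obtain ⟨c, d, hc, hd, h⟩ := h
  have := congrArg (val k a b) h
  simp only [map_mul, map_pow, val_C, val_T] at this
  refine ⟨c ^ e, (d * val k a b E) ^ e, coeff_zero_pow_ne hc _,
    coeff_zero_pow_ne (coeff_zero_mul_ne hd hE) _, ?_⟩
  rw [← mul_pow, this]
  ring

/-- A sequence of forms tied together by divisions whose `K`-th remainder carries a factor `t`:
a continued-fraction expansion of a pair `(F, G)` whose reduction modulo `t` stops after `K`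
steps. -/
structure Model (d₁ d₂ K i : ℕ) (lam mu : ℕ → k) (E Q : ℕ → Rt k) (n₀ : ℕ) : Prop where
  hom : ∀ n, n₀ ≤ n → n ≤ i + 2 → (E n).IsHomogeneous (dg d₁ d₂ n)
  qhom : ∀ n, n₀ ≤ n → n ≤ i → (Q n).IsHomogeneous (dg d₁ d₂ n - dg d₁ d₂ (n + 1))
  rel : ∀ n, n₀ ≤ n → n ≤ i → E n = E (n + 1) * Q n +
    T k ^ (if n = K then 1 else 0) * LL k (lam n) (mu n) ^ ex d₁ d₂ n * E (n + 2)
  nz : ∀ n, n₀ ≤ n → n ≤ i + 2 → ∀ u ≤ i, (val k (lam u) (mu u) (E n)).coeff 0 ≠ 0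

/-- A chain that starts with the same pair as a model follows it, with the expected powers of
`t`, by uniqueness of division. -/
lemma chain_follows_model {d₁ d₂ K i : ℕ} (hK1 : 1 ≤ K) (hi : i + 1 ≤ d₁)
    {lam mu : ℕ → k} (hlm : ∀ u ≤ i, (lam u, mu u) ≠ (0, 0)) {R Q E Q' : ℕ → Rt k}
    (hc : Chain d₁ d₂ i lam mu R Q) (hm : Model d₁ d₂ K i lam mu E Q' 0)
    (h0 : R 0 = E 0) (h1 : R 1 = E 1) :
    ∀ n ≤ i + 2, TRel (n - 1 - K) (R n) (E n) := by
  intro n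
  induction n using Nat.strong_induction_on with
  | _ n ih =>
    intro hn
    match n, ih, hn with
    | 0, _, _ => exact ⟨1, 1, by simp, by simp, by simp [h0]⟩
    | 1, _, _ => exact ⟨1, 1, by simp, by simp, by simp [h1]⟩
    | n + 2, ih, hn =>
      have hni : n ≤ i := by omega
      have ha := ih n (by omega) (by omega)
      have hb := ih (n + 1) (by omega) (by omega)
      have hs := rel_val hb (lam n) (mu n) (hm.nz _ (by omega) (by omega) n hni) (ex d₁ d₂ n)
      have ht : ∃ c d : Polynomial k, c.coeff 0 ≠ 0 ∧ d.coeff 0 ≠ 0 ∧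
          c * ta d₁ d₂ lam mu R n = Polynomial.X ^ (2 * (n - 1 - K)) * d := by
        rcases n with _ | n
        · exact ⟨1, 1, by simp, by simp, by simp [ta]⟩
        · obtain ⟨c, d, h1, h2, h3⟩ := rel_val ha (lam n) (mu n)
            (hm.nz _ (by omega) (by omega) n (by omega)) (ex d₁ d₂ n)
          refine ⟨c, d, h1, h2, ?_⟩
          simp only [ta, sg]
          rw [h3]
          rcases n with _ | n
          · rw [show 0 + 1 - 1 - K = 0 by omega]; simp
          · rfl
      have hes : ex d₁ d₂ n * (n + 1 - 1 - K) = 2 * (n + 1 - 1 - K) := by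
        rcases n with _ | n
        · rw [show 0 + 1 - 1 - K = 0 by omega]; simp
        · rfl
      rw [hes] at hs
      obtain ⟨c1, e1, hc1, he1, hA⟩ := ha
      obtain ⟨c2, e2, hc2, he2, hB⟩ := hb
      obtain ⟨c3, e3, hc3, he3, hS⟩ := hs
      obtain ⟨c4, e4, hc4, he4, hT⟩ := ht
      have hS' := congrArg (C : Polynomial k → Rt k) hS
      have hT' := congrArg (C : Polynomial k → Rt k) hT
      have hCX : (C Polynomial.X : Rt k) = T k := rfl
      simp only [map_mul, map_pow, hCX] at hS' hT'
      have hr := hc.rel n hni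
      have hE := hm.rel n (by omega) hni
      set ε := if n = K then 1 else 0 with hε
      set a := n - 1 - K
      set b := n + 1 - 1 - K
      have hdeg : dg d₁ d₂ (n + 2) < dg d₁ d₂ (n + 1) := by
        simp only [dg]; omega
      have hCTh : ∀ (e : ℕ) (w : Polynomial k) {f : Rt k} {d : ℕ}, f.IsHomogeneous d →
          (T k ^ e * C w * f).IsHomogeneous d := by
        intro e w f d hf
        unfold T
        rw [← map_pow, ← map_mul]
        exact hf.C_mul _
      -- multiplying the division of `R n` by `c1 c2 c3 c4` and inserting the one of `E n`
      have key := cancel_zero (hlm n hni) (ex d₁ d₂ n) (hm.hom (n + 1) (by omega) (by omega))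
        hdeg (hm.nz (n + 1) (by omega) (by omega) n hni)
        (R := T k ^ (2 * b + a + ε) * C (e3 * c4 * c2 * e1) * E (n + 2) -
          T k ^ (2 * a) * C (c1 * c2 * c3 * e4) * R (n + 2))
        (Q := T k ^ (2 * b + a) * C (e3 * c4 * c2 * e1) * Q' n -
          T k ^ b * C (c1 * c3 * c4 * e2) * Q n)
        ((hCTh _ _ (hm.hom (n + 2) (by omega) hn)).sub (hCTh _ _ (hc.hom (n + 2) hn)))
        (by
          simp only [map_mul]
          simp only [sg] at hr
          have e1' : T k ^ (2 * b + a) * C e3 * C c4 * C c2 * C e1 * E n =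
              C c1 * C c2 * C c3 * C c4 *
                (C (val k (lam n) (mu n) (R (n + 1)) ^ ex d₁ d₂ n) * R n) := by
            simp only [map_pow]
            linear_combination (-(C c4 * C c2) * C c1 * R n) * hS'
              - C c4 * C c2 * T k ^ (2 * b) * C e3 * hA
          rw [hr, hE] at e1'
          linear_combination e1' + C c1 * C c3 * C c4 * Q n * hB
            + C c1 * C c2 * C c3 * LL k (lam n) (mu n) ^ ex d₁ d₂ n * R (n + 2) * hT')
      refine ⟨c1 * c2 * c3 * e4, e3 * c4 * c2 * e1,
        coeff_zero_mul_ne (coeff_zero_mul_ne (coeff_zero_mul_ne hc1 hc2) hc3) he4,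
        coeff_zero_mul_ne (coeff_zero_mul_ne (coeff_zero_mul_ne he3 hc4) hc2) he1, ?_⟩
      have hexp : 2 * b + a + ε = 2 * a + (n + 2 - 1 - K) := by
        simp only [a, b, hε]
        split_ifs <;> omega
      rw [hexp, pow_add] at key
      apply mul_left_cancel₀ (T_pow_ne_zero (k := k) (2 * a))
      linear_combination -key

/-- A chain starting with the pair of a model is generic: the values of its terms at the
points have at most the expected orders in `t`. -/
lemma good_of_model {d₁ d₂ K i : ℕ} (hK1 : 1 ≤ K) (hi : i + 1 ≤ d₁)
    {lam mu : ℕ → k} (hlm : ∀ u ≤ i, (lam u, mu u) ≠ (0, 0)) {R Q E Q' : ℕ → Rt k}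
    (hc : Chain d₁ d₂ i lam mu R Q) (hm : Model d₁ d₂ K i lam mu E Q' 0)
    (h0 : R 0 = E 0) (h1 : R 1 = E 1) : Good K i lam mu R := by
  intro n hn hdvd
  obtain ⟨c, d, hc', hd', h⟩ := chain_follows_model hK1 hi hlm hc hm h0 h1 (n + 1) (by omega)
  have := congrArg (val k (lam n) (mu n)) h
  simp only [map_mul, map_pow, val_C, val_T] at this
  rw [show n + 1 - 1 - K = n - K by omega] at this
  have h2 := hdvd.mul_left c
  rw [this, pow_succ, mul_assoc] at h2
  have h3 := (mul_dvd_mul_iff_left (pow_ne_zero _ Polynomial.X_ne_zero)).1 h2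
  exact coeff_zero_mul_ne hd' (hm.nz (n + 1) (by omega) (by omega) n hn) (Polynomial.X_dvd_iff.1 h3)

/-! ### Construction of a model -/

/-- Finitely many affine conditions `a + c * b ≠ 0` can be satisfied simultaneously. -/
lemma exists_avoid [Infinite k] (i : ℕ) (a b : ℕ → k) (h : ∀ u ≤ i, (a u, b u) ≠ (0, 0)) :
    ∃ c : k, ∀ u ≤ i, a u + c * b u ≠ 0 := by
  let P : Polynomial k := ∏ u ∈ Finset.range (i + 1),
    (Polynomial.C (a u) + Polynomial.X * Polynomial.C (b u))
  have hP : P ≠ 0 := by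
    apply Finset.prod_ne_zero_iff.2
    intro u hu h0
    apply h u (by simpa [Nat.lt_succ_iff] using hu)
    have e0 := congrArg (fun f => Polynomial.coeff f 0) h0
    have e1 := congrArg (fun f => Polynomial.coeff f 1) h0
    simp [Polynomial.coeff_C] at e0 e1
    simp [e0, e1]
  obtain ⟨c, hc⟩ : ∃ c, P.eval c ≠ 0 := by
    by_contra! hcon
    exact hP (Polynomial.funext (by simpa using hcon))
  refine ⟨c, fun u hu h0 => hc ?_⟩
  rw [Polynomial.eval_prod]
  apply Finset.prod_eq_zero (i := u) (by simpa [Nat.lt_succ_iff] using hu)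
  simp only [Polynomial.eval_add, Polynomial.eval_mul, Polynomial.eval_C, Polynomial.eval_X]
  exact h0

lemma ex_add_dg {d₁ d₂ n : ℕ} (hd : d₁ ≤ d₂) (hn : n + 1 ≤ d₁) :
    1 * ex d₁ d₂ n + dg d₁ d₂ (n + 2) = dg d₁ d₂ n := by
  rcases n with _ | n <;> simp only [ex, dg] <;> omega

lemma T_pow_mul_hom (e : ℕ) {f : Rt k} {d : ℕ} (hf : f.IsHomogeneous d) :
    (T k ^ e * f).IsHomogeneous d := by
  unfold T
  rw [← map_pow]
  exact hf.C_mul _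

/-- A model is built backwards, by running the Euclidean algorithm in reverse from powers of a
linear form; each quotient is a multiple of such a power, with a constant chosen so that the new
term vanishes at none of the prescribed points. -/
lemma exists_model [Infinite k] {d₁ d₂ K i : ℕ} (hd : d₁ ≤ d₂) (hi : i + 1 ≤ d₁)
    {lam mu : ℕ → k} (hlm : ∀ u ≤ i, (lam u, mu u) ≠ (0, 0)) :
    ∃ E Q, Model d₁ d₂ K i lam mu E Q 0 := by
  obtain ⟨ν, hν⟩ := exists_avoid i lam mu hlm
  -- a linear form vanishing at none of the points
  let N : Rt k := X 0 + C (Polynomial.C ν) * X 1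
  have hN : N.IsHomogeneous 1 := (isHomogeneous_X _ _).add (isHomogeneous_C_mul_X _ _)
  have hNv : ∀ u ≤ i, (val k (lam u) (mu u) N).coeff 0 ≠ 0 := by
    intro u hu
    have := hν u hu
    simpa [N, val] using this
  have hNpow : ∀ m, (N ^ m).IsHomogeneous m := fun m => by simpa using hN.pow m
  suffices ∀ m, ∀ n₀, n₀ + m = i + 1 → ∃ E Q, Model d₁ d₂ K i lam mu E Q n₀ from
    this (i + 1) 0 (by omega)
  intro m
  induction m with
  | zero =>
    intro n₀ hn₀
    refine ⟨fun n => N ^ dg d₁ d₂ n, fun _ => 0, ?_, ?_, ?_, ?_⟩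
    · intro n _ _
      exact hNpow _
    · intro n h1 h2; omega
    · intro n h1 h2; omega
    · intro n _ _ u hu
      rw [map_pow]
      exact coeff_zero_pow_ne (hNv u hu) _
  | succ m ih =>
    intro n₀ hn₀
    obtain ⟨E, Q, hM⟩ := ih (n₀ + 1) (by omega)
    set e := dg d₁ d₂ n₀ - dg d₁ d₂ (n₀ + 1) with he
    set Y : Rt k := T k ^ (if n₀ = K then 1 else 0) *
      LL k (lam n₀) (mu n₀) ^ ex d₁ d₂ n₀ * E (n₀ + 2) with hY
    obtain ⟨c, hc⟩ := exists_avoid i (fun u => (val k (lam u) (mu u) Y).coeff 0)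
      (fun u => (val k (lam u) (mu u) (E (n₀ + 1) * N ^ e)).coeff 0) (by
        intro u hu h0
        rw [Prod.mk.injEq] at h0
        have h0' := h0.2
        rw [map_mul, map_pow] at h0'
        exact coeff_zero_mul_ne (hM.nz _ le_rfl (by omega) u hu)
          (coeff_zero_pow_ne (hNv u hu) e) h0')
    let q : Rt k := C (Polynomial.C c) * N ^ e
    have hq : q.IsHomogeneous e := (hNpow e).C_mul _
    let new : Rt k := E (n₀ + 1) * q + Y
    have hdge : dg d₁ d₂ (n₀ + 1) + e = dg d₁ d₂ n₀ := by
      rw [he]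
      rcases n₀ with _ | n <;> simp only [dg] <;> omega
    have hYh : Y.IsHomogeneous (dg d₁ d₂ n₀) := by
      have h1 := hM.hom (n₀ + 2) (by omega) (by omega)
      have h2 := (LL_hom (lam n₀) (mu n₀)).pow (ex d₁ d₂ n₀)
      have h3 := h2.mul h1
      rw [ex_add_dg hd (by omega)] at h3
      rw [hY, mul_assoc]
      exact T_pow_mul_hom _ h3
    have hnh : new.IsHomogeneous (dg d₁ d₂ n₀) := by
      refine IsHomogeneous.add ?_ hYh
      rw [← hdge]
      exact (hM.hom (n₀ + 1) le_rfl (by omega)).mul hq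
    refine ⟨Function.update E n₀ new, Function.update Q n₀ q, ?_, ?_, ?_, ?_⟩
    · intro n h1 h2
      rcases eq_or_ne n n₀ with rfl | hne
      · simpa using hnh
      · rw [Function.update_of_ne hne]
        exact hM.hom n (by omega) h2
    · intro n h1 h2
      rcases eq_or_ne n n₀ with rfl | hne
      · simpa using hq
      · rw [Function.update_of_ne hne]
        exact hM.qhom n (by omega) h2
    · intro n h1 h2
      rw [Function.update_of_ne (show n + 1 ≠ n₀ by omega),
        Function.update_of_ne (show n + 2 ≠ n₀ by omega)]
      rcases eq_or_ne n n₀ with rfl | hne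
      · simp only [Function.update_self]
        rfl
      · rw [Function.update_of_ne hne, Function.update_of_ne hne]
        exact hM.rel n (by omega) h2
    · intro n h1 h2 u hu
      rcases eq_or_ne n n₀ with rfl | hne
      · rw [Function.update_self]
        have := hc u hu
        have h3 : (val k (lam u) (mu u) new) = val k (lam u) (mu u) Y +
            Polynomial.C c * val k (lam u) (mu u) (E (n + 1) * N ^ e) := by
          simp only [new, q, map_add, map_mul, val_C]
          ring
        rw [h3]
        simpa using this
      · rw [Function.update_of_ne hne]
        exact hM.nz n (by omega) h2 u hu

/-- Modulo `t`, the terms of a model up to the `K+1`-st are multiples of the last one, by forms. -/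
lemma model_factor {d₁ d₂ K i : ℕ} (hd : d₁ ≤ d₂) (hKi : K ≤ i) (hi : i + 1 ≤ d₁)
    {lam mu : ℕ → k} {E Q : ℕ → Rt k} (hM : Model d₁ d₂ K i lam mu E Q 0) :
    ∀ m n, n + m = K + 1 → ∃ l : MvPolynomial (Fin 2) k,
      l.IsHomogeneous (dg d₁ d₂ n - (d₁ - K)) ∧ red k (E n) = red k (E (K + 1)) * l := by
  intro m
  induction m using Nat.strong_induction_on with
  | _ m ih =>
    intro n hn
    match m, ih, hn with
    | 0, _, hn =>
      refine ⟨1, ?_, by rw [show n = K + 1 by omega, mul_one]⟩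
      rw [show n = K + 1 by omega]
      simp only [dg, Nat.sub_self]
      exact isHomogeneous_one _ _
    | 1, _, hn =>
      obtain rfl : n = K := by omega
      refine ⟨red k (Q n), (hM.qhom n (by omega) (by omega)).map _, ?_⟩
      rw [hM.rel n (by omega) (by omega)]
      simp [red_T]
    | m + 2, ih, hn =>
      obtain ⟨l1, h1, e1⟩ := ih (m + 1) (by omega) (n + 1) (by omega)
      obtain ⟨l2, h2, e2⟩ := ih m (by omega) (n + 2) (by omega)
      refine ⟨l1 * red k (Q n) + ell k (lam n) (mu n) ^ ex d₁ d₂ n * l2, ?_, ?_⟩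
      · have a1 := h1.mul ((hM.qhom n (by omega) (by omega)).map Polynomial.constantCoeff)
        have a2 := ((ell_hom (lam n) (mu n)).pow (ex d₁ d₂ n)).mul h2
        have b1 := ex_add_dg (d₁ := d₁) (d₂ := d₂) (n := n) hd (by omega)
        have b2 : d₁ - K ≤ dg d₁ d₂ (n + 2) := by simp only [dg]; omega
        have b3 : dg d₁ d₂ (n + 2) ≤ dg d₁ d₂ (n + 1) := by simp only [dg]; omega
        have b4 : dg d₁ d₂ (n + 1) ≤ dg d₁ d₂ n := by
          rcases n with _ | n <;> simp only [dg] <;> omega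
        refine IsHomogeneous.add ?_ ?_
        · have b5 : dg d₁ d₂ n - (d₁ - K) =
              dg d₁ d₂ (n + 1) - (d₁ - K) + (dg d₁ d₂ n - dg d₁ d₂ (n + 1)) := by omega
          rw [b5]
          exact a1
        · convert a2 using 1
          rw [← b1]
          exact Nat.add_sub_assoc b2 _
      · rw [hM.rel n (by omega) (by omega), if_neg (by omega)]
        simp only [map_add, map_mul, map_pow, red_LL, e1, e2]
        ring

lemma liftT_hom {f : MvPolynomial (Fin 2) k} {d : ℕ} (hf : f.IsHomogeneous d) :
    (liftT k f).IsHomogeneous d := hf.map _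

/-- Splitting off the reduction modulo `t`. -/
lemma exists_split {f : Rt k} {d : ℕ} (hf : f.IsHomogeneous d) :
    ∃ φ : Rt k, φ.IsHomogeneous d ∧ f = liftT k (red k f) + T k * φ := by
  have h : T k ∣ f - liftT k (red k f) := by
    rw [T_dvd_iff, map_sub, red_liftT, sub_self]
  obtain ⟨φ, hφ⟩ := h
  refine ⟨φ, hom_of_T_mul (n := 1) ?_, by rw [← hφ]; ring⟩
  rw [pow_one, ← hφ]
  exact hf.sub (liftT_hom (hf.map _))

/-! ### Specialization of division systems -/

/-- A binary form is the sum of its coefficients times the monomials `X₀^(d-j) X₁^j`. -/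
lemma binary_form_expand {R : Type*} [CommRing R] {F : MvPolynomial (Fin 2) R} {d : ℕ}
    (hF : F.IsHomogeneous d) :
    ∑ j ∈ Finset.range (d + 1),
      C (coeff (Finsupp.single 0 (d - j) + Finsupp.single 1 j) F) * X 0 ^ (d - j) * X 1 ^ j
      = F := by
  have hmon : ∀ j (c : R), (C c * X 0 ^ (d - j) * X 1 ^ j : MvPolynomial (Fin 2) R) =
      monomial (Finsupp.single 0 (d - j) + Finsupp.single 1 j) c := by
    intro j c
    rw [X_pow_eq_monomial, X_pow_eq_monomial, C_mul_monomial, monomial_mul]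
    simp
  simp only [hmon]
  ext e
  rw [coeff_sum]
  simp only [coeff_monomial]
  by_cases he : e.degree = d
  · have he2 : e 0 + e 1 = d := by
      rw [← he, Finsupp.degree_eq_sum]; simp
    have hee : Finsupp.single 0 (d - e 1) + Finsupp.single 1 (e 1) = e := by
      ext x
      fin_cases x
      · simp; omega
      · simp
    rw [Finset.sum_eq_single (e 1)]
    · rw [if_pos hee, hee]
    · intro j _ hj
      rw [if_neg]
      intro h
      apply hj
      rw [← h]; simp
    · intro h
      exact absurd (Finset.mem_range.2 (by omega)) h
  · rw [hF.coeff_eq_zero he]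
    apply Finset.sum_eq_zero
    intro j hj
    rw [if_neg]
    rintro rfl
    apply he
    rw [Finset.mem_range] at hj
    rw [Finsupp.degree_eq_sum]; simp; omega

section ev
variable (d₁ d₂ : ℕ) (F G : Rt k)

lemma ev_fgen (hF : F.IsHomogeneous d₁) : evalFGt k d₁ d₂ F G (fgen k d₁) = F := by
  conv_rhs => rw [← binary_form_expand hF]
  simp [fgen, evalFGt, fA, XA]

lemma ev_ggen (hG : G.IsHomogeneous d₂) : evalFGt k d₁ d₂ F G (ggen k d₂) = G := by
  conv_rhs => rw [← binary_form_expand hG]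
  simp [ggen, evalFGt, gA, XA]

lemma ev_C (c : k) : evalFGt k d₁ d₂ F G (C c) = C (Polynomial.C c) := by
  rw [← algebraMap_eq, AlgHom.commutes]
  rfl

lemma ev_Lform (a b : k) : evalFGt k d₁ d₂ F G (Lform k a b) = LL k a b := by
  simp only [Lform, LL, map_sub, map_mul, ev_C]
  simp [evalFGt, XA]

/-- Specializing `a(λ,μ)` amounts to specializing `a` and then taking the value at `(λ, μ)`. -/
lemma ev_evalXY (a b : k) (x : MvPolynomial Avars k) :
    evalFGt k d₁ d₂ F G (evalXY k a b x) = C (val k a b (evalFGt k d₁ d₂ F G x)) := by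
  have : ((evalFGt k d₁ d₂ F G).toRingHom.comp (evalXY k a b).toRingHom) =
      (C.comp (val k a b)).comp (evalFGt k d₁ d₂ F G).toRingHom := by
    apply MvPolynomial.ringHom_ext
    · intro c
      have h1 : evalXY k a b (C c) = C c := by simp [evalXY]
      simp [h1, val_C]
    · intro v
      rcases v with v | v | v
      · fin_cases v
        · have h1 : evalXY k a b (X (Sum.inl 0)) = C a := by simp [evalXY]
          simp [h1]
          simp [evalFGt, val]
        · have h1 : evalXY k a b (X (Sum.inl 1)) = C b := by simp [evalXY]
          simp [h1]
          simp [evalFGt, val]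
      · simp [evalXY, evalFGt, val]
      · simp [evalXY, evalFGt, val]
  exact congrArg (fun g => g x) this

/-- Only the first component of the tridegree, the degree in `X₀, X₁`, survives specialization. -/
lemma ev_hom {x : MvPolynomial Avars k} {m : ℕ × ℕ × ℕ} (hx : IsWeightedHomogeneous wA x m) :
    (evalFGt k d₁ d₂ F G x).IsHomogeneous m.1 := by
  rw [x.as_sum, map_sum]
  apply IsHomogeneous.sum
  intro e he
  have hw := hx (mem_support_iff.1 he)
  have hm : m.1 = ∑ v ∈ e.support, (wA v).1 * e v := by
    rw [← hw, Finsupp.weight_apply, Finsupp.sum, Prod.fst_sum]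
    apply Finset.sum_congr rfl
    intro v _
    simp [mul_comm]
  rw [hm, evalFGt, aeval_monomial, IsScalarTower.algebraMap_apply k (Polynomial k) (Rt k)]
  apply IsHomogeneous.C_mul
  apply IsHomogeneous.prod
  intro v _
  apply IsHomogeneous.pow
  rcases v with v | v | v
  · exact isHomogeneous_X _ _
  · exact isHomogeneous_C _ _
  · exact isHomogeneous_C _ _

end ev

/-- The sequence `G, F, r₀, r₁, …` specialized at `(F, G)`. -/
def chainSeq (d₁ d₂ : ℕ) (F G : Rt k) (r : ℕ → MvPolynomial Avars k) : ℕ → Rt k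
  | 0 => G
  | 1 => F
  | n + 2 => evalFGt k d₁ d₂ F G (r n)

/-- The three identities of a division system become a single recursion after specialization. -/
lemma chain_of_system {d₁ d₂ i : ℕ} {lam mu : ℕ → k} {r q : ℕ → MvPolynomial Avars k}
    (hds : IsDivisionSystem k d₁ d₂ lam mu i r q) {F G : Rt k}
    (hF : F.IsHomogeneous d₁) (hG : G.IsHomogeneous d₂) :
    Chain d₁ d₂ i lam mu (chainSeq d₁ d₂ F G r) (fun n => evalFGt k d₁ d₂ F G (q n)) := by
  obtain ⟨hr, -, h0, h1, h2⟩ := hds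
  constructor
  · intro n hn
    match n, hn with
    | 0, _ => exact hG
    | 1, _ => exact hF
    | n + 2, hn =>
      have := ev_hom d₁ d₂ F G (hr n (by omega))
      simp only [chainSeq, dg]
      rwa [show d₁ - (n + 1) = d₁ - 1 - n by omega]
  · intro n hn
    match n, hn with
    | 0, _ =>
      have := congrArg (evalFGt k d₁ d₂ F G) h0
      simp only [map_mul, map_add, map_pow, ev_evalXY, ev_Lform, ev_fgen d₁ d₂ F G hF,
        ev_ggen d₁ d₂ F G hG] at this
      simpa [chainSeq, sg, ta, ex] using this
    | 1, hn =>
      have := congrArg (evalFGt k d₁ d₂ F G) (h1 hn)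
      simp only [map_mul, map_add, map_pow, ev_evalXY, ev_Lform, ev_fgen d₁ d₂ F G hF] at this
      simpa [chainSeq, sg, ta, ex] using this
    | n + 2, hn =>
      have := congrArg (evalFGt k d₁ d₂ F G) (h2 (n + 2) (by omega) hn)
      simp only [map_mul, map_add, map_pow, ev_evalXY, ev_Lform] at this
      simpa [chainSeq, sg, ta, ex] using this

/-! ### Polynomial families -/

/-- A family of elements of `k[t][X₀,X₁]` depending polynomially on a parameter `s` of `k`. -/
def PolyDep (f : k → Rt k) : Prop :=
  ∃ Φ : Polynomial (Rt k), ∀ s, Φ.eval (C (Polynomial.C s)) = f s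

namespace PolyDep

lemma const (a : Rt k) : PolyDep fun _ => a := ⟨Polynomial.C a, by simp⟩

lemma param : PolyDep fun s : k => (C (Polynomial.C s) : Rt k) := ⟨Polynomial.X, by simp⟩

lemma add {f g : k → Rt k} (hf : PolyDep f) (hg : PolyDep g) : PolyDep fun s => f s + g s := by
  obtain ⟨Φ, hΦ⟩ := hf
  obtain ⟨Ψ, hΨ⟩ := hg
  exact ⟨Φ + Ψ, by simp [hΦ, hΨ]⟩

lemma mul {f g : k → Rt k} (hf : PolyDep f) (hg : PolyDep g) : PolyDep fun s => f s * g s := by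
  obtain ⟨Φ, hΦ⟩ := hf
  obtain ⟨Ψ, hΨ⟩ := hg
  exact ⟨Φ * Ψ, by simp [hΦ, hΨ]⟩

lemma coeff_eq {Φ : Polynomial (Rt k)} (e : Fin 2 →₀ ℕ) (s : k) :
    (Φ.eval (C (Polynomial.C s))).coeff e =
      ∑ j ∈ Finset.range (Φ.natDegree + 1), (Φ.coeff j).coeff e * Polynomial.C s ^ j := by
  rw [Polynomial.eval_eq_sum_range, coeff_sum]
  apply Finset.sum_congr rfl
  intro j _
  rw [← map_pow, mul_comm, coeff_C_mul, mul_comm]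

lemma C_coeff {f : k → Rt k} (hf : PolyDep f) (e : Fin 2 →₀ ℕ) :
    PolyDep fun s => C ((f s).coeff e) := by
  obtain ⟨Φ, hΦ⟩ := hf
  refine ⟨∑ j ∈ Finset.range (Φ.natDegree + 1),
    Polynomial.C (C ((Φ.coeff j).coeff e)) * Polynomial.X ^ j, fun s => ?_⟩
  change _ = C ((f s).coeff e)
  rw [← hΦ, coeff_eq, Polynomial.eval_finsetSum]
  simp

lemma coeff_coeff {f : k → Rt k} (hf : PolyDep f) (e : Fin 2 →₀ ℕ) (d : ℕ) :
    ∃ c : Polynomial k, ∀ s, c.eval s = ((f s).coeff e).coeff d := by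
  obtain ⟨Φ, hΦ⟩ := hf
  refine ⟨∑ j ∈ Finset.range (Φ.natDegree + 1),
    Polynomial.C (((Φ.coeff j).coeff e).coeff d) * Polynomial.X ^ j, fun s => ?_⟩
  rw [← hΦ, coeff_eq, Polynomial.eval_finsetSum, Polynomial.finsetSum_coeff]
  apply Finset.sum_congr rfl
  intro j _
  rw [← map_pow, Polynomial.coeff_mul_C]
  simp

lemma ev {F G : k → Rt k} (hF : PolyDep F) (hG : PolyDep G) (d₁ d₂ : ℕ)
    (a : MvPolynomial Avars k) : PolyDep fun s => evalFGt k d₁ d₂ (F s) (G s) a := by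
  induction a using MvPolynomial.induction_on with
  | C c =>
    simp only [ev_C]
    exact const _
  | add a b ha hb =>
    simp only [map_add]
    exact ha.add hb
  | mul_X a v ha =>
    simp only [map_mul]
    refine ha.mul ?_
    rcases v with v | v | v
    · simpa [evalFGt] using const (X v)
    · simpa [evalFGt] using hF.C_coeff _
    · simpa [evalFGt] using hG.C_coeff _

/-- Divisibility by `t^n` is a closed condition on the members of a polynomial family. -/
lemma finite_dvd {f : k → Rt k} (hf : PolyDep f) {n : ℕ} {s₀ : k} (h : ¬ T k ^ n ∣ f s₀) :
    {s | T k ^ n ∣ f s}.Finite := by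
  simp only [T_pow_dvd_iff, not_forall] at h ⊢
  obtain ⟨e, d, hd, h⟩ := h
  obtain ⟨c, hc⟩ := hf.coeff_coeff e d
  have hc0 : c ≠ 0 := by
    rintro rfl
    exact h (by rw [← hc]; simp)
  refine (c.finite_setOfPred_isRoot hc0).subset fun s hs => ?_
  simp only [Set.mem_ofPred_eq, Polynomial.IsRoot] at hs ⊢
  rw [hc]
  exact hs e d hd

end PolyDep

/-- Affine interpolation between `a` (at `s = 0`) and `b` (at `s = 1`). -/
def seg {R : Type*} [CommRing R] (a b s : R) : R := a + s * (b - a)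

/-- A path `s ↦ p_s * l_s + t * φ_s` of forms whose reduction modulo `t` is factored, from
`p * l + t * φ` at `s = 0` to `p' * l' + t * φ'` at `s = 1`. -/
def path (p p' l l' : MvPolynomial (Fin 2) k) (φ φ' : Rt k) (s : k) : Rt k :=
  liftT k (seg p p' (C s) * seg l l' (C s)) + T k * seg φ φ' (C (Polynomial.C s))

lemma seg_hom {R : Type*} [CommRing R] {a b : MvPolynomial (Fin 2) R} {n : ℕ}
    (ha : a.IsHomogeneous n) (hb : b.IsHomogeneous n) (s : R) :
    (seg a b (C s)).IsHomogeneous n :=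
  ha.add ((hb.sub ha).C_mul _)

lemma path_hom {p p' l l' : MvPolynomial (Fin 2) k} {φ φ' : Rt k} {m n d : ℕ}
    (hp : p.IsHomogeneous m) (hp' : p'.IsHomogeneous m) (hl : l.IsHomogeneous n)
    (hl' : l'.IsHomogeneous n) (hφ : φ.IsHomogeneous d) (hφ' : φ'.IsHomogeneous d)
    (hd : m + n = d) (s : k) : (path p p' l l' φ φ' s).IsHomogeneous d := by
  subst hd
  refine (liftT_hom ((seg_hom hp hp' s).mul (seg_hom hl hl' s))).add ?_
  exact (seg_hom hφ hφ' (Polynomial.C s)).C_mul _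

lemma red_path (p p' l l' : MvPolynomial (Fin 2) k) (φ φ' : Rt k) (s : k) :
    red k (path p p' l l' φ φ' s) = seg p p' (C s) * seg l l' (C s) := by
  simp only [path, map_add, red_liftT, map_mul, red_T, zero_mul, add_zero]

lemma path_zero (p p' l l' : MvPolynomial (Fin 2) k) (φ φ' : Rt k) :
    path p p' l l' φ φ' 0 = liftT k (p * l) + T k * φ := by
  simp [path, seg]

lemma path_one (p p' l l' : MvPolynomial (Fin 2) k) (φ φ' : Rt k) :
    path p p' l l' φ φ' 1 = liftT k (p' * l') + T k * φ' := by
  simp [path, seg]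

lemma polyDep_path (p p' l l' : MvPolynomial (Fin 2) k) (φ φ' : Rt k) :
    PolyDep (path p p' l l' φ φ') := by
  have hs : ∀ a b : Rt k, PolyDep fun s => seg a b (C (Polynomial.C s)) := fun a b =>
    (PolyDep.const a).add (PolyDep.param.mul (PolyDep.const (b - a)))
  have h := ((hs (liftT k p) (liftT k p')).mul (hs (liftT k l) (liftT k l'))).add
    ((PolyDep.const (T k)).mul (hs φ φ'))
  convert h using 2 with s
  simp [path, seg, liftT, map_C]

/-! ### The divisibility -/

/-- The divisibility for arbitrary perturbations `φ, γ` over `k[t]`. The pair is joined by a path to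
the pair of a model, and `T_pow_dvd_chain` applies at all but finitely many points of the path. -/
theorem dvd_of_system [Infinite k] {d₁ d₂ K i : ℕ} (hd : d₁ ≤ d₂) (hK1 : 1 ≤ K) (hKi : K ≤ i)
    (hi : i + 1 ≤ d₁) {lam mu : ℕ → k} (hlm : ∀ u ≤ i, (lam u, mu u) ≠ (0, 0))
    {r q : ℕ → MvPolynomial Avars k} (hds : IsDivisionSystem k d₁ d₂ lam mu i r q)
    {p l h : MvPolynomial (Fin 2) k} {φ γ : Rt k} (hp : p.IsHomogeneous (d₁ - K))
    (hl : l.IsHomogeneous K) (hh : h.IsHomogeneous (d₂ - d₁ + K))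
    (hφ : φ.IsHomogeneous d₁) (hγ : γ.IsHomogeneous d₂) :
    T k ^ (i - K + 1) ∣
      evalFGt k d₁ d₂ (liftT k (p * l) + T k * φ) (liftT k (p * h) + T k * γ) (r i) := by
  obtain ⟨E, Q, hM⟩ := exists_model (K := K) hd hi hlm
  set p' := red k (E (K + 1)) with hpE
  have hp' : p'.IsHomogeneous (d₁ - K) := (hM.hom (K + 1) (by omega) (by omega)).map _
  obtain ⟨l', hl', hEl⟩ := model_factor hd hKi hi hM K 1 (by omega)
  obtain ⟨h', hh', hEh⟩ := model_factor hd hKi hi hM (K + 1) 0 (by omega)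
  rw [show dg d₁ d₂ 1 - (d₁ - K) = K by simp only [dg]; omega] at hl'
  rw [show dg d₁ d₂ 0 - (d₁ - K) = d₂ - d₁ + K by simp only [dg]; omega] at hh'
  obtain ⟨φ', hφ', hE1⟩ := exists_split (hM.hom 1 (by omega) (by omega))
  obtain ⟨γ', hγ', hE0⟩ := exists_split (hM.hom 0 (by omega) (by omega))
  rw [hEl] at hE1
  rw [hEh] at hE0
  let F : k → Rt k := path p p' l l' φ φ'
  let G : k → Rt k := path p p' h h' γ γ'
  have hF : ∀ s, (F s).IsHomogeneous d₁ := path_hom hp hp' hl hl' hφ hφ' (by omega)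
  have hG : ∀ s, (G s).IsHomogeneous d₂ := path_hom hp hp' hh hh' hγ hγ' (by omega)
  have hF1 : F 1 = E 1 := by rw [hE1]; exact path_one ..
  have hG1 : G 1 = E 0 := by rw [hE0]; exact path_one ..
  have hdep : ∀ a, PolyDep fun s => evalFGt k d₁ d₂ (F s) (G s) a :=
    PolyDep.ev (polyDep_path ..) (polyDep_path ..) d₁ d₂
  have hchain := fun s => chain_of_system hds (hF s) (hG s)
  rw [← path_zero p p' l l' φ φ', ← path_zero p p' h h' γ γ']
  by_contra hcon
  have hgood1 : Good K i lam mu (chainSeq d₁ d₂ (F 1) (G 1) r) :=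
    good_of_model hK1 hi hlm (hchain 1) hM hG1 hF1
  -- the parameters `s` at which the orders in `t` exceed the generic ones
  have hbad1 : ∀ n ∈ Set.Iic i, {s | (Polynomial.X : Polynomial k) ^ (n - K + 1) ∣
      val k (lam n) (mu n) (chainSeq d₁ d₂ (F s) (G s) r (n + 1))}.Finite := by
    intro n hn
    obtain ⟨a, ha⟩ : ∃ a, ∀ s, chainSeq d₁ d₂ (F s) (G s) r (n + 1) =
        evalFGt k d₁ d₂ (F s) (G s) a := by
      rcases n with _ | n
      · exact ⟨fgen k d₁, fun s => (ev_fgen d₁ d₂ _ _ (hF s)).symm⟩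
      · exact ⟨r n, fun s => rfl⟩
    have hg := hgood1 n hn
    simp only [ha, ← T_pow_dvd_C_iff, ← ev_evalXY] at hg ⊢
    exact (hdep _).finite_dvd hg
  -- the parameters `s` at which the common factor vanishes at one of the points
  have hbad2 : ∀ u ∈ Set.Iic i, {s | evalPt k (lam u) (mu u) (seg p p' (C s)) = 0}.Finite := by
    intro u hu
    have hne : evalPt k (lam u) (mu u) p' ≠ 0 := by
      rw [hpE, ← val_coeff_zero]
      exact hM.nz (K + 1) (by omega) (by omega) u hu
    set a := evalPt k (lam u) (mu u) p with ha
    set b := evalPt k (lam u) (mu u) p' with hb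
    have hseg : ∀ s, evalPt k (lam u) (mu u) (seg p p' (C s)) = seg a b s := by
      intro s
      simp [seg, evalPt, ha, hb]
    have hc0 : (seg (Polynomial.C a) (Polynomial.C b) Polynomial.X : Polynomial k) ≠ 0 := by
      intro h0
      apply hne
      simpa [seg] using congrArg (Polynomial.eval 1) h0
    refine (Polynomial.finite_setOfPred_isRoot hc0).subset fun s hs => ?_
    simp only [Set.mem_ofPred_eq, hseg] at hs
    simpa [seg] using hs
  have hfin := (((Set.finite_Iic i).biUnion hbad1).union
    ((Set.finite_Iic i).biUnion hbad2)).union ((hdep (r i)).finite_dvd hcon)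
  obtain ⟨s, hs⟩ := hfin.exists_notMem
  simp only [Set.mem_union, Set.mem_iUnion, Set.mem_ofPred_eq, not_or, not_exists,
    Set.mem_Iic] at hs
  obtain ⟨⟨hs1, hs2⟩, hs3⟩ := hs
  apply hs3
  have := T_pow_dvd_chain hK1 hKi hi hlm (hchain s) (seg_hom hp hp' s) hs2
    ⟨_, red_path p p' h h' γ γ' s⟩ ⟨_, red_path p p' l l' φ φ' s⟩ hs1 (i + 2) le_rfl
  rwa [show i + 2 - 1 - K = i - K + 1 by omega] at this

end

/-- Let `1 ≤ K ≤ i ≤ d₁-1` and let `(r_h, q_h)_{0 ≤ h ≤ i}` be a division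
system up to level `i`. Then for all binary forms `p, l, h, φ, γ` of degrees `d₁-K`, `K`,
`d₂-d₁+K`, `d₁` and `d₂`, the image of `r_i` in `k[t][X₀,X₁]` under evaluation at
`(p·l + t·φ, p·h + t·γ)` is divisible by `t^{i-K+1}`. -/
theorem statement7 [IsAlgClosed k] (d₁ d₂ : ℕ) (hd₁ : 1 ≤ d₁) (hd : d₁ < d₂)
    (K i : ℕ) (hK1 : 1 ≤ K) (hKi : K ≤ i) (hi : i ≤ d₁ - 1)
    (lam mu : ℕ → k) (hlm : ∀ u ≤ i, (lam u, mu u) ≠ (0, 0))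
    (r q : ℕ → MvPolynomial Avars k)
    (hds : IsDivisionSystem k d₁ d₂ lam mu i r q)
    (p l h φ γ : MvPolynomial (Fin 2) k)
    (hp : p.IsHomogeneous (d₁ - K)) (hl : l.IsHomogeneous K)
    (hh : h.IsHomogeneous (d₂ - d₁ + K))
    (hφ : φ.IsHomogeneous d₁) (hγ : γ.IsHomogeneous d₂) :
    (C Polynomial.X : MvPolynomial (Fin 2) (Polynomial k)) ^ (i - K + 1) ∣
      evalFGt k d₁ d₂
        (liftT k (p * l) + C Polynomial.X * liftT k φ)
        (liftT k (p * h) + C Polynomial.X * liftT k γ) (r i) := by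
  have : Infinite k := IsAlgClosed.instInfinite
  exact dvd_of_system hd.le hK1 hKi (by omega) hlm hds hp hl hh (liftT_hom hφ) (liftT_hom hγ)

end
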